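/- Let μ ∈ ℝ, μ ≠ 0, let A₀, A₁, A₂, A₃, A₄ ∈ ℝ, and let h : ℝ → ℝ be smooth with h'(x) ≠ 0 for all x. Suppose h satisfies the trigonometric second-order equation for all x ∈ ℝ: ((A₀h − A₁)h'³ + A₃cos(μx) + (A₄/μ)sin(μx))·h'' + A₀h'⁵ + ((μ²/2)A₀h² − μ²A₁h + A₂)·h'³ + μ(A₃sin(μx) − (A₄/μ)cos(μx))·h' = 0. Then there exists a real constant A₆ such that for all x ∈ ℝ: (A₀h − A₁)²h'³ + ((μ/2)(A₀h − 2A₁)h·((μ/2)(A₀h − 2A₁)h + 2A₂/μ) + (2A₀/μ)(A₃sin(μx) − (A₄/μ)cos(μx)) + A₆/(4μ²))·h' − 2(A₀h − A₁)(A₃cos(μx) + (A₄/μ)sin(μx)) = 0. -/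

import Mathlib

/-!
Multiplying the second-order equation by the integrating factor `2 (A₀ h - A₁) / h'²` makes it
exact. The terms `(A₀ h - A₁) h'³ h''` and `A₀ h'⁵` combine to `((A₀ h - A₁)² h'²)'`, and the term
cubic in `h'` becomes the derivative of a function of `h`. Writing
`C = A₃ cos (μ x) + (A₄ / μ) sin (μ x)`, the remaining terms become `-2 (A₀ h - A₁) (C / h')'`,
which is `2 A₀ C - (2 (A₀ h - A₁) C / h')'`; and `C` has an explicit antiderivative.
-/

section FirstIntegral

variable {𝕜 : Type*}

/-- The first integral of `((a h - b) h'³ + W) h'' + a h'⁵ + q(h) h'³ - W' h' = 0`, obtained with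
the integrating factor `2 (a h - b) / h'²`. Here `h'` is the derivative of `h`, `V` is an
antiderivative of `W`, and `G` is an antiderivative of `y ↦ 2 (a y - b) q(y)`. -/
def firstIntegral [Field 𝕜] (a b : 𝕜) (G V W h h' : 𝕜 → 𝕜) (x : 𝕜) : 𝕜 :=
  (a * h x - b) ^ 2 * h' x ^ 2 + G (h x) + 2 * a * V x - 2 * (a * h x - b) * W x / h' x

theorem firstIntegral_eq_iff [Field 𝕜] {a b K x : 𝕜} {G V W h h' : 𝕜 → 𝕜} (hne : h' x ≠ 0) :
    firstIntegral a b G V W h h' x = K ↔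
      (a * h x - b) ^ 2 * h' x ^ 3 + (G (h x) + 2 * a * V x - K) * h' x
        - 2 * (a * h x - b) * W x = 0 := by
  have factor : (a * h x - b) ^ 2 * h' x ^ 3 + (G (h x) + 2 * a * V x - K) * h' x
      - 2 * (a * h x - b) * W x = (firstIntegral a b G V W h h' x - K) * h' x := by
    unfold firstIntegral
    field_simp
    ring
  rw [factor, mul_eq_zero_iff_right hne, sub_eq_zero]

theorem hasDerivAt_firstIntegral [NontriviallyNormedField 𝕜] {a b q h'' W' x : 𝕜}
    {G V W h h' : 𝕜 → 𝕜}
    (hh : HasDerivAt h (h' x) x) (hh' : HasDerivAt h' h'' x)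
    (hV : HasDerivAt V (W x) x) (hW : HasDerivAt W W' x)
    (hG : HasDerivAt G (2 * (a * h x - b) * q) (h x)) (hne : h' x ≠ 0) :
    HasDerivAt (firstIntegral a b G V W h h')
      (2 * (a * h x - b) / h' x ^ 2 *
        (((a * h x - b) * h' x ^ 3 + W x) * h'' + a * h' x ^ 5 + q * h' x ^ 3 - W' * h' x)) x := by
  have hu : HasDerivAt (fun t ↦ a * h t - b) (a * h' x) x := (hh.const_mul a).sub_const b
  have kinetic := (hu.fun_pow 2).fun_mul (hh'.fun_pow 2)
  have potential := (hG.comp x hh).fun_add (hV.const_mul (2 * a))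
  have quotient := ((hu.const_mul 2).fun_mul hW).fun_div hh' hne
  refine (((kinetic.fun_add potential).fun_sub quotient).congr_deriv ?_).congr_of_eventuallyEq ?_
  · field_simp
    ring
  · exact .of_forall fun t ↦ by simp only [firstIntegral, Function.comp_apply, add_assoc]

theorem exists_firstIntegral_eq_of_ode [RCLike 𝕜] {s : Set 𝕜} (hs : IsOpen s)
    (hs' : IsPreconnected s) {a b : 𝕜} {q G V W W' h h' h'' : 𝕜 → 𝕜}
    (hh : ∀ x ∈ s, HasDerivAt h (h' x) x) (hh' : ∀ x ∈ s, HasDerivAt h' (h'' x) x)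
    (hV : ∀ x ∈ s, HasDerivAt V (W x) x) (hW : ∀ x ∈ s, HasDerivAt W (W' x) x)
    (hG : ∀ x ∈ s, HasDerivAt G (2 * (a * h x - b) * q (h x)) (h x))
    (hne : ∀ x ∈ s, h' x ≠ 0)
    (hode : ∀ x ∈ s, ((a * h x - b) * h' x ^ 3 + W x) * h'' x + a * h' x ^ 5
      + q (h x) * h' x ^ 3 - W' x * h' x = 0) :
    ∃ K, ∀ x ∈ s, firstIntegral a b G V W h h' x = K := by
  have hderiv : ∀ x ∈ s, HasDerivAt (firstIntegral a b G V W h h') 0 x := fun x hx ↦ by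
    simpa only [hode x hx, mul_zero] using hasDerivAt_firstIntegral (hh x hx) (hh' x hx)
      (hV x hx) (hW x hx) (hG x hx) (hne x hx)
  exact hs.exists_is_const_of_deriv_eq_zero hs'
    (fun x hx ↦ (hderiv x hx).differentiableAt.differentiableWithinAt)
    (fun x hx ↦ (hderiv x hx).deriv)

end FirstIntegral

theorem hasDerivAt_quadratic_mul_self_add {𝕜 : Type*} [NontriviallyNormedField 𝕜] [CharZero 𝕜]
    {μ : 𝕜} (hμ : μ ≠ 0) (a b c y : 𝕜) :
    HasDerivAt
      (fun y ↦ μ / 2 * (a * y - 2 * b) * y * (μ / 2 * (a * y - 2 * b) * y + 2 * c / μ))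
      (2 * (a * y - b) * (μ ^ 2 / 2 * a * y ^ 2 - μ ^ 2 * b * y + c)) y := by
  have hQ : HasDerivAt (fun y ↦ μ / 2 * (a * y - 2 * b) * y) (μ * (a * y - b)) y := by
    refine (((((hasDerivAt_id' y).const_mul a).sub_const (2 * b)).const_mul (μ / 2)).fun_mul
      (hasDerivAt_id' y)).congr_deriv ?_
    field_simp
    ring
  refine (hQ.fun_mul (hQ.add_const (2 * c / μ))).congr_deriv ?_
  field_simp
  ring

theorem hasDerivAt_cos_mul_add_sin_mul (μ a b x : ℝ) :
    HasDerivAt (fun x ↦ a * Real.cos (μ * x) + b * Real.sin (μ * x))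
      (-(μ * (a * Real.sin (μ * x) - b * Real.cos (μ * x)))) x := by
  have hμx : HasDerivAt (fun x ↦ μ * x) μ x := hasDerivAt_const_mul μ
  exact ((hμx.cos.const_mul a).fun_add (hμx.sin.const_mul b)).congr_deriv (by ring)

theorem hasDerivAt_sin_mul_sub_cos_mul (μ a b x : ℝ) :
    HasDerivAt (fun x ↦ a * Real.sin (μ * x) - b * Real.cos (μ * x))
      (μ * (a * Real.cos (μ * x) + b * Real.sin (μ * x))) x := by
  have hμx : HasDerivAt (fun x ↦ μ * x) μ x := hasDerivAt_const_mul μ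
  exact ((hμx.sin.const_mul a).fun_sub (hμx.cos.const_mul b)).congr_deriv (by ring)

theorem stmt_5_general {𝕜 : Type*} [RCLike 𝕜] {s : Set 𝕜} (hs : IsOpen s)
    (hs' : IsPreconnected s) {μ A0 A1 A2 : 𝕜} (hμ : μ ≠ 0) {C S h : 𝕜 → 𝕜}
    (hC : ∀ x ∈ s, HasDerivAt C (-(μ * S x)) x) (hS : ∀ x ∈ s, HasDerivAt S (μ * C x) x)
    (hh' : ∀ x ∈ s, DifferentiableAt 𝕜 (deriv h) x) (hne : ∀ x ∈ s, deriv h x ≠ 0)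
    (hode : ∀ x ∈ s,
      ((A0 * h x - A1) * deriv h x ^ 3 + C x) * deriv (deriv h) x + A0 * deriv h x ^ 5
        + (μ ^ 2 / 2 * A0 * h x ^ 2 - μ ^ 2 * A1 * h x + A2) * deriv h x ^ 3
        + μ * S x * deriv h x = 0) :
    ∃ A6 : 𝕜, ∀ x ∈ s,
      (A0 * h x - A1) ^ 2 * deriv h x ^ 3
        + (μ / 2 * (A0 * h x - 2 * A1) * h x
              * (μ / 2 * (A0 * h x - 2 * A1) * h x + 2 * A2 / μ)
            + 2 * A0 / μ * S x + A6 / (4 * μ ^ 2)) * deriv h x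
        - 2 * (A0 * h x - A1) * C x = 0 := by
  have hV : ∀ x ∈ s, HasDerivAt (fun x ↦ S x / μ) (C x) x := fun x hx ↦ by
    simpa only [mul_div_cancel_left₀ _ hμ] using (hS x hx).div_const μ
  obtain ⟨K, hK⟩ := exists_firstIntegral_eq_of_ode hs hs'
    (q := fun y ↦ μ ^ 2 / 2 * A0 * y ^ 2 - μ ^ 2 * A1 * y + A2)
    (fun x hx ↦ (differentiableAt_of_deriv_ne_zero (hne x hx)).hasDerivAt)
    (fun x hx ↦ (hh' x hx).hasDerivAt) hV hC
    (fun x _ ↦ hasDerivAt_quadratic_mul_self_add hμ A0 A1 A2 (h x)) hne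
    (fun x hx ↦ by linear_combination hode x hx)
  refine ⟨-(4 * μ ^ 2) * K, fun x hx ↦ ?_⟩
  have hA6 : -(4 * μ ^ 2) * K / (4 * μ ^ 2) = -K := by field_simp
  rw [hA6]
  linear_combination (firstIntegral_eq_iff (hne x hx)).1 (hK x hx)

theorem stmt_5 (μ A0 A1 A2 A3 A4 : ℝ) (hμ : μ ≠ 0) (h : ℝ → ℝ)
    (hh : ContDiff ℝ (⊤ : ℕ∞) h) (hhx : ∀ x, deriv h x ≠ 0)
    (hode : ∀ x : ℝ,
      ((A0 * h x - A1) * (deriv h x)^3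
          + A3 * Real.cos (μ * x) + A4 / μ * Real.sin (μ * x)) * deriv (deriv h) x
        + A0 * (deriv h x)^5
        + (μ^2 / 2 * A0 * (h x)^2 - μ^2 * A1 * h x + A2) * (deriv h x)^3
        + μ * (A3 * Real.sin (μ * x) - A4 / μ * Real.cos (μ * x)) * deriv h x = 0) :
    ∃ A6 : ℝ, ∀ x : ℝ,
      (A0 * h x - A1)^2 * (deriv h x)^3
        + (μ / 2 * (A0 * h x - 2 * A1) * h x
              * (μ / 2 * (A0 * h x - 2 * A1) * h x + 2 * A2 / μ)
            + 2 * A0 / μ * (A3 * Real.sin (μ * x) - A4 / μ * Real.cos (μ * x))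
            + A6 / (4 * μ^2))
          * deriv h x
        - 2 * (A0 * h x - A1)
            * (A3 * Real.cos (μ * x) + A4 / μ * Real.sin (μ * x)) = 0 := by
  obtain ⟨A6, hA6⟩ := stmt_5_general isOpen_univ isPreconnected_univ hμ
    (fun x _ ↦ hasDerivAt_cos_mul_add_sin_mul μ A3 (A4 / μ) x)
    (fun x _ ↦ hasDerivAt_sin_mul_sub_cos_mul μ A3 (A4 / μ) x)
    (fun x _ ↦ (contDiff_infty_iff_deriv.1 hh).2.differentiable (by simp) x) (fun x _ ↦ hhx x)
    (fun x _ ↦ by simpa only [add_assoc] using hode x)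
  exact ⟨A6, fun x ↦ hA6 x trivial⟩
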